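/- For each d ≥ 1 and each k = 1,…,d there exists a constant C(k,d) > 0 such that for all α ∈ [0,1) one has q_L(α,d,k) ≥ C(k,d)·(1−α)^k. -/

import Mathlib

open MeasureTheory Filter ENNReal

/-- Sites of `ℤ^{d+1}`. -/
abbrev Site (d : ℕ) := Fin (d + 1) → ℤ

/-- Site-percolation configurations on `ℤ^{d+1}`: a site is open iff its value is `true`. -/
abbrev Config (d : ℕ) := Site d → Bool

/-- `P` is the i.i.d. Bernoulli(`p`) product measure on `{0,1}^ι`: it is a probability
measure whose cylinder events have the correct product probabilities. -/
def IsBernoulli {ι : Type*} (p : ℝ) (P : Measure (ι → Bool)) : Prop :=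
  IsProbabilityMeasure P ∧
    ∀ (s : Finset ι) (f : ι → Bool),
      P {ω | ∀ x ∈ s, ω x = f x} =
        ∏ x ∈ s, (if f x then ENNReal.ofReal p else ENNReal.ofReal (1 - p))

/-- A function `F : ℤ^d → ℤ` is Lipschitz: `‖x − y‖₁ = 1 → |F x − F y| ≤ 1`. -/
def IsLipschitzFn {d : ℕ} (F : (Fin d → ℤ) → ℤ) : Prop :=
  ∀ x y : Fin d → ℤ, (∑ i, |x i - y i|) = 1 → |F x - F y| ≤ 1

/-- Height `⌊α ∑ᵢ ηᵢ xᵢ⌋` of the tilted plane `L^{α,d}_η` above `x ∈ ℤ^d`. -/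
noncomputable def planeHt (α : ℝ) {d : ℕ} (η x : Fin d → ℤ) : ℤ :=
  ⌊α * ∑ i, (η i : ℝ) * (x i : ℝ)⌋

/-- `η ∈ {-1,0,1}^d`. -/
def IsSign {d : ℕ} (η : Fin d → ℤ) : Prop := ∀ i, η i = -1 ∨ η i = 0 ∨ η i = 1

/-- The event `LIP^{α,d}_η` that there is an open Lipschitz surface lying (strictly) above
the tilted plane `L^{α,d}_η`. -/
def LIP (α : ℝ) {d : ℕ} (η : Fin d → ℤ) : Set (Config d) :=
  {ω | ∃ F : (Fin d → ℤ) → ℤ, IsLipschitzFn F ∧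
    ∀ x : Fin d → ℤ, ω (Fin.snoc x (F x)) = true ∧ planeHt α η x < F x}

/-- `pc` is the critical probability `p_L(α,d,η)` of Lipschitz percolation above the tilted
plane `L^{α,d}_η`: `pc ∈ (0,1)`, for `p` below it there is `P_p`-a.s. no open Lipschitz
surface above the plane, and for `p` above it there `P_p`-a.s. is one.
(Here `P p` is the Bernoulli(`p`) product measure on `{0,1}^{ℤ^{d+1}}`.) -/
def IsCriticalProb {d : ℕ} (P : ℝ → Measure (Config d)) (α : ℝ) (η : Fin d → ℤ)
    (pc : ℝ) : Prop :=
  pc ∈ Set.Ioo (0 : ℝ) 1 ∧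
    (∀ p, 0 ≤ p → p < pc → P p (LIP α η) = 0) ∧
    (∀ p, pc < p → p ≤ 1 → P p (LIP α η) = 1)

/-- The canonical direction vector `η ∈ {-1,0,1}^d` with `k` entries equal to `1`; the
critical probability `p_L(α,d,η)` depends on `η` only through `k = ‖η‖₁`, and
`p_L(α,d,k)` denotes the common value. -/
def etaK (d k : ℕ) : Fin d → ℤ := fun i => if (i : ℕ) < k then 1 else 0

/-!
Consider the paths that start on or below the tilted plane, descend freely inside the cones
`{(u, -m) : ‖u‖₁ ≤ m}`, and move up by one unit only onto closed sites. If no column of `ℤ^{d+1}`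
is entirely reachable, the lowest unreachable sites form an open Lipschitz surface above the plane.

Let `L` be the signed height above the plane. Paths are traced backwards, from a given site to the
plane. The function `exp (-L)` is at least `1` on and below the plane, and summing it over the
endpoints of one backward step multiplies it by at most a constant times `(1 - α)⁻ᵏ`: each of the
`k` tilted coordinates contributes a geometric series of ratio `exp (-(1 - α))`. Hence, if the
density `q` of closed sites is at most a small multiple of `(1 - α)ᵏ`, a first-moment bound over
loop-erased paths shows that a site is reachable with probability at most `exp (-L)`, which tends
to `0` up each column.
-/

/-- `Reaches R B C v`: some point of `B` can be reached from `v` by finitely many steps of the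
relation `R`, each of them onto a point of `C`. The starting point need not lie in `C`. -/
def Reaches {V : Type*} (R : V → V → Prop) (B C : Set V) (v : V) : Prop :=
  ∃ b ∈ B, Relation.ReflTransGen (fun x y => R x y ∧ y ∈ C) v b

theorem reflTransGen_and_ne_source {V : Type*} {r : V → V → Prop} {a b : V}
    (h : Relation.ReflTransGen r a b) :
    Relation.ReflTransGen (fun x y => r x y ∧ y ≠ a) a b := by
  induction h with
  | refl => exact .refl
  | @tail _ c _ hbc ih =>
    rcases eq_or_ne c a with rfl | hne
    · exact .refl
    · exact ih.tail ⟨hbc, hne⟩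

namespace Reaches

variable {V : Type*} {R : V → V → Prop} {B C C' : Set V} {v w : V}

theorem of_mem (hv : v ∈ B) : Reaches R B C v := ⟨v, hv, .refl⟩

theorem cons (hR : R v w) (hw : w ∈ C) (h : Reaches R B C w) : Reaches R B C v :=
  let ⟨b, hb, hwb⟩ := h
  ⟨b, hb, hwb.head ⟨hR, hw⟩⟩

theorem mono (hC : C ⊆ C') (h : Reaches R B C v) : Reaches R B C' v :=
  let ⟨b, hb, hvb⟩ := h
  ⟨b, hb, Relation.ReflTransGen.mono (fun _ _ hxy => ⟨hxy.1, hC hxy.2⟩) v b hvb⟩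

theorem mem_or_exists_step (h : Reaches R B C v) :
    v ∈ B ∨ ∃ c ∈ C, R v c ∧ Reaches R B C c := by
  obtain ⟨b, hb, hvb⟩ := h
  rcases hvb.cases_head with rfl | ⟨c, ⟨hR, hc⟩, hcb⟩
  · exact .inl hb
  · exact .inr ⟨c, hc, hR, b, hb, hcb⟩

theorem diff_singleton_self (h : Reaches R B C v) : Reaches R B (C \ {v}) v :=
  let ⟨b, hb, hvb⟩ := h
  ⟨b, hb, Relation.ReflTransGen.mono (fun _ _ hxy => ⟨hxy.1.1, hxy.1.2, hxy.2⟩) v b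
    (reflTransGen_and_ne_source hvb)⟩

theorem exists_finset (h : Reaches R B C v) : ∃ T : Finset V, Reaches R B (C ∩ T) v := by
  classical
  obtain ⟨b, hb, hvb⟩ := h
  induction hvb using Relation.ReflTransGen.head_induction_on with
  | refl => exact ⟨∅, of_mem hb⟩
  | @head x y hxy _ ih =>
    obtain ⟨T, hT⟩ := ih
    refine ⟨insert y T, cons hxy.1 ⟨hxy.2, by simp⟩ (hT.mono ?_)⟩
    gcongr
    simp

end Reaches

section FirstMoment

variable {Ω V : Type*} [MeasurableSpace Ω] {μ : Measure Ω} {C : Ω → Set V} {q : ℝ≥0∞}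
  {R : V → V → Prop} {B : Set V} {W : V → ℝ≥0∞}

/- Every step onto a point `c` consumes it: loop erasure leaves a path inside `T \ {c}`, while `c`
joins the set `s` of points already known to lie in `C ω`. Hence each step costs a factor `q`,
although the events along different paths are far from disjoint or independent. -/
theorem measure_subset_and_reaches_inter_le [Countable V]
    (hC : ∀ s : Finset V, μ {ω | ↑s ⊆ C ω} ≤ q ^ s.card) (hB : ∀ v ∈ B, 1 ≤ W v)
    (hW : ∀ v ∉ B, q * ∑' c : {c // R v c}, W c ≤ W v) (T s : Finset V) (hsT : Disjoint s T)
    (v : V) : μ {ω | ↑s ⊆ C ω ∧ Reaches R B (C ω ∩ T) v} ≤ q ^ s.card * W v := by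
  classical
  induction T using Finset.strongInduction generalizing s v with
  | H T ih =>
  by_cases hv : v ∈ B
  · calc μ {ω | ↑s ⊆ C ω ∧ Reaches R B (C ω ∩ T) v}
        ≤ μ {ω | ↑s ⊆ C ω} := measure_mono fun _ hω => hω.1
      _ ≤ q ^ s.card := hC s
      _ ≤ q ^ s.card * W v := le_mul_of_one_le_right' (hB v hv)
  let E (c : V) : Set Ω :=
    {ω | c ∈ T ∧ ↑(insert c s) ⊆ C ω ∧ Reaches R B (C ω ∩ ↑(T.erase c)) c}
  have hcover : {ω | ↑s ⊆ C ω ∧ Reaches R B (C ω ∩ T) v} ⊆ ⋃ c : {c // R v c}, E c := by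
    rintro ω ⟨hs, hreach⟩
    obtain ⟨c, ⟨hcC, hcT⟩, hR, hc⟩ := hreach.mem_or_exists_step.resolve_left hv
    refine Set.mem_iUnion.2 ⟨⟨c, hR⟩, hcT, ?_, ?_⟩
    · simpa [Set.insert_subset_iff] using ⟨hcC, hs⟩
    · simpa [Set.inter_sdiff_assoc] using hc.diff_singleton_self
  have hE (c : V) : μ (E c) ≤ q ^ s.card * (q * W c) := by
    by_cases hcT : c ∈ T
    · have hcs : c ∉ s := Finset.disjoint_right.1 hsT hcT
      have hdisj : Disjoint (insert c s) (T.erase c) :=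
        Finset.disjoint_insert_left.2
          ⟨Finset.notMem_erase c T, hsT.mono_right (Finset.erase_subset c T)⟩
      calc μ (E c) ≤ q ^ (insert c s).card * W c :=
            (measure_mono fun _ hω => hω.2).trans
              (ih _ (Finset.erase_ssubset hcT) (insert c s) hdisj c)
        _ = q ^ s.card * (q * W c) := by
            rw [Finset.card_insert_of_notMem hcs, pow_succ, mul_assoc]
    · simp [E, hcT]
  calc μ {ω | ↑s ⊆ C ω ∧ Reaches R B (C ω ∩ T) v}
      ≤ ∑' c : {c // R v c}, μ (E c) := (measure_mono hcover).trans (measure_iUnion_le _)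
    _ ≤ ∑' c : {c // R v c}, q ^ s.card * (q * W c) := ENNReal.tsum_le_tsum fun c => hE c
    _ = q ^ s.card * (q * ∑' c : {c // R v c}, W c) := by
        rw [ENNReal.tsum_mul_left, ENNReal.tsum_mul_left]
    _ ≤ q ^ s.card * W v := by gcongr; exact hW v hv

theorem measure_reaches_le [Countable V] (hC : ∀ s : Finset V, μ {ω | ↑s ⊆ C ω} ≤ q ^ s.card)
    (hB : ∀ v ∈ B, 1 ≤ W v) (hW : ∀ v ∉ B, q * ∑' c : {c // R v c}, W c ≤ W v) (v : V) :
    μ {ω | Reaches R B (C ω) v} ≤ W v := by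
  have hdir : Directed (· ⊆ ·) fun T : Finset V => {ω | Reaches R B (C ω ∩ T) v} :=
    Monotone.directed_le fun T T' hTT' ω hω => hω.mono (by gcongr)
  calc μ {ω | Reaches R B (C ω) v}
      ≤ μ (⋃ T : Finset V, {ω | Reaches R B (C ω ∩ T) v}) :=
        measure_mono fun _ hω => Set.mem_iUnion.2 hω.exists_finset
    _ = ⨆ T : Finset V, μ {ω | Reaches R B (C ω ∩ T) v} := hdir.measure_iUnion
    _ ≤ W v := iSup_le fun T => by
        simpa using measure_subset_and_reaches_inter_le hC hB hW T ∅ (by simp) v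

theorem measure_reaches_le_exp_neg [AddCommGroup V] [Countable V] {K : Set V} {L : V →+ ℝ}
    (hC : ∀ s : Finset V, μ {ω | ↑s ⊆ C ω} ≤ q ^ s.card)
    (hK : q * ∑' k : K, ENNReal.ofReal (Real.exp (-L k)) ≤ 1) (v : V) :
    μ {ω | Reaches (fun x y => y - x ∈ K) {b | L b ≤ 0} (C ω) v} ≤
      ENNReal.ofReal (Real.exp (-L v)) := by
  refine measure_reaches_le (W := fun v => ENNReal.ofReal (Real.exp (-L v))) hC
    (fun b hb => ?_) (fun x _ => ?_) v
  · exact ENNReal.one_le_ofReal.2 (Real.one_le_exp (neg_nonneg.2 hb))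
  have hsplit (y : V) : ENNReal.ofReal (Real.exp (-L y)) =
      ENNReal.ofReal (Real.exp (-L x)) * ENNReal.ofReal (Real.exp (-L (y - x))) := by
    rw [← ENNReal.ofReal_mul (Real.exp_nonneg _), ← Real.exp_add, map_sub]
    ring_nf
  have hshift : ∑' y : {y // y - x ∈ K}, ENNReal.ofReal (Real.exp (-L (y - x))) =
      ∑' k : K, ENNReal.ofReal (Real.exp (-L k)) :=
    ((Equiv.subRight x).subtypeEquiv fun _ => Iff.rfl).tsum_eq
      fun k : K => ENNReal.ofReal (Real.exp (-L k))
  calc q * ∑' y : {y // y - x ∈ K}, ENNReal.ofReal (Real.exp (-L y))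
      = q * (ENNReal.ofReal (Real.exp (-L x)) *
          ∑' k : K, ENNReal.ofReal (Real.exp (-L k))) := by
        rw [← hshift, ← ENNReal.tsum_mul_left (a := ENNReal.ofReal _)]
        exact congrArg (q * ·) (tsum_congr fun y => hsplit y)
    _ = ENNReal.ofReal (Real.exp (-L x)) *
          (q * ∑' k : K, ENNReal.ofReal (Real.exp (-L k))) := mul_left_comm _ _ _
    _ ≤ ENNReal.ofReal (Real.exp (-L x)) := mul_le_of_le_one_right' hK

end FirstMoment

section Geometry

variable {d : ℕ}

/-- The cone `{(u, m) : ‖u‖₁ ≤ m}` in `ℤ^d × ℤ`. Sites `(x, h)` are written as pairs here; a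
Lipschitz surface with `v` below it also has `w` below it whenever `v - w` lies in the cone. -/
def upwardCone (d : ℕ) : Set ((Fin d → ℤ) × ℤ) := {v | ∑ i, |v.1 i| ≤ v.2}

/-- The steps of a path traced backwards: climb inside `upwardCone d` to a closed site, then move
one unit down. Only the positions after the unit moves are recorded, so the closed site used by a
step is the one directly above its endpoint. -/
def backwardStep (d : ℕ) : Set ((Fin d → ℤ) × ℤ) := {v | v + (0, 1) ∈ upwardCone d}

/-- The positions lying directly below a closed site. -/
def belowClosed (ω : Config d) : Set ((Fin d → ℤ) × ℤ) :=
  {v | ω (Fin.snoc v.1 (v.2 + 1)) = false}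

/-- Signed height of a position above the real hyperplane through the origin with slopes `a`. -/
noncomputable def excess (a : Fin d → ℝ) : (Fin d → ℤ) × ℤ →+ ℝ :=
  AddMonoidHom.mk' (fun v => v.2 - ∑ i, a i * v.1 i) fun v w => by
    simp only [Prod.fst_add, Prod.snd_add, Pi.add_apply, Int.cast_add, mul_add,
      Finset.sum_add_distrib]
    ring

/-- The positions from which a backward path ends on or below the hyperplane with slopes `a`. -/
def reachableSet (a : Fin d → ℝ) (ω : Config d) : Set ((Fin d → ℤ) × ℤ) :=
  {v | Reaches (fun x y => y - x ∈ backwardStep d) {b | excess a b ≤ 0} (belowClosed ω) v}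

theorem excess_apply (a : Fin d → ℝ) (v : (Fin d → ℤ) × ℤ) :
    excess a v = v.2 - ∑ i, a i * v.1 i := rfl

theorem add_mem_upwardCone {v w : (Fin d → ℤ) × ℤ} (hv : v ∈ upwardCone d)
    (hw : w ∈ upwardCone d) : v + w ∈ upwardCone d := by
  calc ∑ i, |v.1 i + w.1 i| ≤ ∑ i, (|v.1 i| + |w.1 i|) :=
        Finset.sum_le_sum fun i _ => abs_add_le _ _
    _ = ∑ i, |v.1 i| + ∑ i, |w.1 i| := Finset.sum_add_distrib
    _ ≤ v.2 + w.2 := add_le_add hv hw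

theorem excess_nonneg {a : Fin d → ℝ} (ha : ∀ i, |a i| ≤ 1) {v : (Fin d → ℤ) × ℤ}
    (hv : v ∈ upwardCone d) : 0 ≤ excess a v := by
  rw [excess_apply, sub_nonneg]
  calc ∑ i, a i * v.1 i ≤ ∑ i, |(v.1 i : ℝ)| := Finset.sum_le_sum fun i _ => by
        calc a i * v.1 i ≤ |a i| * |(v.1 i : ℝ)| := by
              rw [← abs_mul]
              exact le_abs_self _
          _ ≤ |(v.1 i : ℝ)| := mul_le_of_le_one_left (abs_nonneg _) (ha i)
    _ ≤ v.2 := by exact_mod_cast hv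

theorem mem_reachableSet_of_sub_mem_upwardCone {a : Fin d → ℝ} (ha : ∀ i, |a i| ≤ 1)
    {ω : Config d} {v w : (Fin d → ℤ) × ℤ} (hv : v ∈ reachableSet a ω)
    (hvw : v - w ∈ upwardCone d) : w ∈ reachableSet a ω := by
  rcases Reaches.mem_or_exists_step hv with hB | ⟨c, hc, hstep, hreach⟩
  · have hle : excess a w ≤ excess a v := by
      simpa only [map_sub, sub_nonneg] using excess_nonneg ha hvw
    exact Reaches.of_mem (hle.trans hB)
  · refine Reaches.cons ?_ hc hreach
    have hcw : c - w + (0, 1) = (c - v + (0, 1)) + (v - w) := by abel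
    change c - w + (0, 1) ∈ upwardCone d
    rw [hcw]
    exact add_mem_upwardCone hstep hvw

theorem apply_snoc_eq_true_of_notMem_reachableSet {a : Fin d → ℝ} {ω : Config d}
    {x : Fin d → ℤ} {h : ℤ} (hbelow : (x, h - 1) ∈ reachableSet a ω)
    (hnot : (x, h) ∉ reachableSet a ω) : ω (Fin.snoc x h) = true := by
  by_contra hclosed
  refine hnot (Reaches.cons ?_ ?_ hbelow)
  · simp [backwardStep, upwardCone]
  · simpa [belowClosed] using hclosed

theorem exists_isLipschitzFn_boundary {U : Set ((Fin d → ℤ) × ℤ)}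
    (hU : ∀ v ∈ U, ∀ w, v - w ∈ upwardCone d → w ∈ U)
    (hmem : ∀ x, ∃ h, (x, h) ∈ U) (hnot : ∀ x, ∃ h, (x, h) ∉ U) :
    ∃ F : (Fin d → ℤ) → ℤ, IsLipschitzFn F ∧ ∀ x, (x, F x - 1) ∈ U ∧ (x, F x) ∉ U := by
  have htop (x : Fin d → ℤ) : ∃ h, (x, h - 1) ∈ U ∧ (x, h) ∉ U := by
    obtain ⟨m, hm⟩ := hnot x
    have hbdd : ∀ h, (x, h) ∈ U → h ≤ m := fun h hh => by
      by_contra! hlt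
      exact hm (hU _ hh _ (by simpa [upwardCone] using hlt.le))
    obtain ⟨b, hb, hmax⟩ := Int.exists_greatest_of_bdd ⟨m, hbdd⟩ (hmem x)
    exact ⟨b + 1, by simpa using hb, fun hb' => by linarith [hmax _ hb']⟩
  choose F hbelow hF using htop
  have hstep (x y : Fin d → ℤ) (hxy : ∑ i, |x i - y i| = 1) : F x - F y ≤ 1 := by
    by_contra! hlt
    exact hF y (hU _ (hbelow x) _ (show ∑ i, |x i - y i| ≤ F x - 1 - F y by omega))
  refine ⟨F, fun x y hxy => abs_le.2 ⟨?_, hstep x y hxy⟩, fun x => ⟨hbelow x, hF x⟩⟩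
  have hyx : ∑ i, |y i - x i| = 1 := by simpa only [abs_sub_comm] using hxy
  linarith [hstep y x hyx]

theorem planeHt_lt_iff {α : ℝ} {η x : Fin d → ℤ} {h : ℤ} :
    planeHt α η x < h ↔ 0 < excess (fun i => α * η i) (x, h) := by
  simp only [planeHt, Int.floor_lt, excess_apply, sub_pos, Finset.mul_sum, mul_assoc]

theorem mem_LIP_of_forall_exists_notMem_reachableSet {α : ℝ} {η : Fin d → ℤ}
    (hη : ∀ i, |α * η i| ≤ 1) {ω : Config d}
    (hω : ∀ x, ∃ h, (x, h) ∉ reachableSet (fun i => α * η i) ω) : ω ∈ LIP α η := by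
  have hplane (x : Fin d → ℤ) (h : ℤ) (hh : h ≤ planeHt α η x) :
      (x, h) ∈ reachableSet (fun i => α * η i) ω :=
    Reaches.of_mem (not_lt.1 fun hpos => hh.not_gt (planeHt_lt_iff.2 hpos))
  obtain ⟨F, hLip, hF⟩ := exists_isLipschitzFn_boundary
    (fun v hv w hvw => mem_reachableSet_of_sub_mem_upwardCone hη hv hvw)
    (fun x => ⟨_, hplane x _ le_rfl⟩) hω
  exact ⟨F, hLip, fun x => ⟨apply_snoc_eq_true_of_notMem_reachableSet (hF x).1 (hF x).2,
    not_le.1 fun hle => (hF x).2 (hplane x _ hle)⟩⟩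

end Geometry

section Weights

theorem tsum_pi_prod_eq_prod_tsum {n : ℕ} {ι : Fin n → Type*} (g : ∀ i, ι i → ℝ≥0∞) :
    ∑' x : ∀ i, ι i, ∏ i, g i (x i) = ∏ i, ∑' a, g i a := by
  induction n with
  | zero => simp
  | succ n ih =>
    rw [← (Fin.consEquiv ι).tsum_eq, ENNReal.tsum_prod', Fin.prod_univ_succ,
      ← ih fun i => g i.succ, ← ENNReal.tsum_mul_right]
    refine tsum_congr fun a => ?_
    rw [← ENNReal.tsum_mul_left]
    simp [Fin.consEquiv, Fin.prod_univ_succ]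

theorem tsum_nat_exp_neg_mul_le {t : ℝ} (ht : 0 < t) :
    ∑' n : ℕ, ENNReal.ofReal (Real.exp (-(t * n))) ≤ ENNReal.ofReal (1 + 1 / t) := by
  have hlt : Real.exp (-t) < 1 := Real.exp_lt_one_iff.2 (neg_neg_of_pos ht)
  have hpow (n : ℕ) : Real.exp (-(t * n)) = Real.exp (-t) ^ n := by
    rw [← Real.exp_nat_mul]
    ring_nf
  have hexp : Real.exp (-t) ≤ 1 / (1 + t) := by
    rw [Real.exp_neg, ← one_div]
    exact one_div_le_one_div_of_le (by positivity) (by linarith [Real.add_one_le_exp t])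
  simp_rw [hpow]
  rw [← ENNReal.ofReal_tsum_of_nonneg (fun n => by positivity)
    (summable_geometric_of_lt_one (Real.exp_nonneg _) hlt),
    tsum_geometric_of_lt_one (Real.exp_nonneg _) hlt]
  refine ENNReal.ofReal_le_ofReal (inv_le_of_inv_le₀ (by positivity) ?_)
  calc (1 + 1 / t)⁻¹ = 1 - 1 / (1 + t) := by field_simp; ring
    _ ≤ 1 - Real.exp (-t) := by linarith

theorem tsum_int_exp_neg_mul_abs_le {t : ℝ} (ht : 0 < t) :
    ∑' n : ℤ, ENNReal.ofReal (Real.exp (-(t * |(n : ℝ)|))) ≤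
      ENNReal.ofReal (2 * (1 + 1 / t)) := by
  have hnat := tsum_nat_exp_neg_mul_le ht
  have hneg : ∑' n : ℕ, ENNReal.ofReal (Real.exp (-(t * |((-(n + 1 : ℤ) : ℤ) : ℝ)|))) ≤
      ∑' n : ℕ, ENNReal.ofReal (Real.exp (-(t * n))) := by
    refine ENNReal.tsum_le_tsum fun n => ?_
    gcongr
    push_cast
    rw [abs_neg, abs_of_nonneg (by positivity)]
    linarith
  rw [tsum_of_nat_of_neg_add_one ENNReal.summable ENNReal.summable, two_mul,
    ENNReal.ofReal_add (by positivity) (by positivity)]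
  refine add_le_add ?_ (hneg.trans hnat)
  simpa only [Int.cast_natCast, Nat.abs_cast] using hnat

theorem tsum_int_exp_neg_abs_sub_mul_le {β : ℝ} (hβ : |β| < 1) :
    ∑' n : ℤ, ENNReal.ofReal (Real.exp (-(|(n : ℝ)| - β * n))) ≤
      ENNReal.ofReal (4 / (1 - |β|)) := by
  have ht : 0 < 1 - |β| := sub_pos.2 hβ
  have hle (n : ℤ) : (1 - |β|) * |(n : ℝ)| ≤ |(n : ℝ)| - β * n := by
    have : β * n ≤ |β| * |(n : ℝ)| := (le_abs_self _).trans (abs_mul _ _).le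
    linarith
  calc ∑' n : ℤ, ENNReal.ofReal (Real.exp (-(|(n : ℝ)| - β * n)))
      ≤ ∑' n : ℤ, ENNReal.ofReal (Real.exp (-((1 - |β|) * |(n : ℝ)|))) := by
        gcongr with n
        exact hle n
    _ ≤ ENNReal.ofReal (2 * (1 + 1 / (1 - |β|))) := tsum_int_exp_neg_mul_abs_le ht
    _ ≤ ENNReal.ofReal (4 / (1 - |β|)) := by
        gcongr
        have hone : 1 ≤ 1 / (1 - |β|) := one_le_one_div ht (by linarith [abs_nonneg β])
        linarith [show 4 / (1 - |β|) = 4 * (1 / (1 - |β|)) by ring]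

theorem tsum_backwardStep_le_tsum {d : ℕ} (f : (Fin d → ℤ) × ℤ → ℝ≥0∞) :
    ∑' k : backwardStep d, f k ≤
      ∑' (u : Fin d → ℤ) (j : ℕ), f (u, ∑ i, |u i| + j - 1) := by
  let e : (Fin d → ℤ) × ℕ → backwardStep d := fun p =>
    ⟨(p.1, ∑ i, |p.1 i| + p.2 - 1), by simp [backwardStep, upwardCone]⟩
  have he : Function.Surjective e := by
    rintro ⟨⟨u, m⟩, hum⟩
    have hle : ∑ i, |u i| ≤ m + 1 := by simpa [backwardStep, upwardCone] using hum
    obtain ⟨j, hj⟩ := Int.le.dest hle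
    exact ⟨(u, j), by simp [e, hj]⟩
  rw [← ENNReal.tsum_prod]
  exact ENNReal.tsum_le_tsum_comp_of_surjective he fun k => f k

theorem ofReal_exp_neg_excess {d : ℕ} (a : Fin d → ℝ) (u : Fin d → ℤ) (j : ℕ) :
    ENNReal.ofReal (Real.exp (-excess a (u, ∑ i, |u i| + j - 1))) =
      ENNReal.ofReal (Real.exp 1) *
        (∏ i, ENNReal.ofReal (Real.exp (-(|(u i : ℝ)| - a i * u i)))) *
          ENNReal.ofReal (Real.exp (-(1 * j))) := by
  rw [← ENNReal.ofReal_prod_of_nonneg fun _ _ => Real.exp_nonneg _, ← Real.exp_sum,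
    ← ENNReal.ofReal_mul (by positivity), ← ENNReal.ofReal_mul (by positivity),
    ← Real.exp_add, ← Real.exp_add, Finset.sum_neg_distrib, Finset.sum_sub_distrib, excess_apply]
  push_cast
  ring_nf

theorem tsum_backwardStep_exp_neg_excess_le {d : ℕ} {a : Fin d → ℝ} (ha : ∀ i, |a i| < 1) :
    ∑' k : backwardStep d, ENNReal.ofReal (Real.exp (-excess a k)) ≤
      ENNReal.ofReal (6 * ∏ i, 4 / (1 - |a i|)) := by
  have hnonneg : ∀ i ∈ Finset.univ, 0 ≤ 4 / (1 - |a i|) := fun i _ =>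
    div_nonneg zero_le_four (sub_nonneg.2 (ha i).le)
  calc ∑' k : backwardStep d, ENNReal.ofReal (Real.exp (-excess a k))
      ≤ ∑' (u : Fin d → ℤ) (j : ℕ),
          ENNReal.ofReal (Real.exp (-excess a (u, ∑ i, |u i| + j - 1))) :=
        tsum_backwardStep_le_tsum fun v => ENNReal.ofReal (Real.exp (-excess a v))
    _ = ENNReal.ofReal (Real.exp 1) *
          (∏ i, ∑' n : ℤ, ENNReal.ofReal (Real.exp (-(|(n : ℝ)| - a i * n)))) *
            ∑' j : ℕ, ENNReal.ofReal (Real.exp (-(1 * j))) := by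
        simp_rw [ofReal_exp_neg_excess, ENNReal.tsum_mul_left, ENNReal.tsum_mul_right,
          ENNReal.tsum_mul_left]
        rw [tsum_pi_prod_eq_prod_tsum
          fun i (n : ℤ) => ENNReal.ofReal (Real.exp (-(|(n : ℝ)| - a i * n)))]
    _ ≤ ENNReal.ofReal 3 * (∏ i, ENNReal.ofReal (4 / (1 - |a i|))) *
          ENNReal.ofReal (1 + 1 / 1) := by
        gcongr with i
        · exact Real.exp_one_lt_three.le
        · exact tsum_int_exp_neg_abs_sub_mul_le (ha i)
        · exact tsum_nat_exp_neg_mul_le one_pos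
    _ = ENNReal.ofReal (6 * ∏ i, 4 / (1 - |a i|)) := by
        rw [← ENNReal.ofReal_prod_of_nonneg hnonneg, ← ENNReal.ofReal_mul zero_le_three,
          ← ENNReal.ofReal_mul (mul_nonneg zero_le_three (Finset.prod_nonneg hnonneg))]
        ring_nf

end Weights

section Percolation

variable {d : ℕ} {μ : Measure (Config d)} {q : ℝ≥0∞}

theorem measure_subset_belowClosed_le
    (hμ : ∀ s : Finset (Site d), μ {ω | ∀ x ∈ s, ω x = false} ≤ q ^ s.card)
    (s : Finset ((Fin d → ℤ) × ℤ)) : μ {ω | ↑s ⊆ belowClosed ω} ≤ q ^ s.card := by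
  let above : (Fin d → ℤ) × ℤ ↪ Site d :=
    ⟨fun v => Fin.snoc v.1 (v.2 + 1), fun v w hvw => by
      obtain ⟨h1, h2⟩ := Fin.snoc_injective2 hvw
      exact Prod.ext h1 (add_right_cancel h2)⟩
  rw [← Finset.card_map above]
  refine (measure_mono fun ω hω => ?_).trans (hμ (s.map above))
  exact Finset.forall_mem_map.2 fun v hv => hω hv

theorem ae_exists_notMem_reachableSet {a : Fin d → ℝ}
    (hμ : ∀ s : Finset (Site d), μ {ω | ∀ x ∈ s, ω x = false} ≤ q ^ s.card)
    (hq : q * ∑' k : backwardStep d, ENNReal.ofReal (Real.exp (-excess a k)) ≤ 1) :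
    ∀ᵐ ω ∂μ, ∀ x, ∃ h, (x, h) ∉ reachableSet a ω := by
  refine ae_all_iff.2 fun x => ?_
  have hle (h : ℕ) : μ {ω | ∀ h : ℤ, (x, h) ∈ reachableSet a ω} ≤
      ENNReal.ofReal (Real.exp (-excess a (x, (h : ℤ)))) :=
    calc μ {ω | ∀ h : ℤ, (x, h) ∈ reachableSet a ω}
        ≤ μ {ω | (x, (h : ℤ)) ∈ reachableSet a ω} := measure_mono fun _ hω => hω h
      _ ≤ ENNReal.ofReal (Real.exp (-excess a (x, (h : ℤ)))) :=
          measure_reaches_le_exp_neg (measure_subset_belowClosed_le hμ) hq _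
  have hlim : Tendsto (fun h : ℕ => ENNReal.ofReal (Real.exp (-excess a (x, (h : ℤ)))))
      atTop (nhds 0) := by
    rw [← ENNReal.ofReal_zero]
    refine ENNReal.tendsto_ofReal (Real.tendsto_exp_neg_atTop_nhds_zero.comp ?_)
    simp only [excess_apply, Int.cast_natCast, sub_eq_add_neg]
    exact tendsto_atTop_add_const_right _ _ tendsto_natCast_atTop_atTop
  simpa only [ae_iff, not_exists, not_not] using
    le_antisymm (ge_of_tendsto' hlim hle) zero_le

theorem ae_mem_LIP_of_measure_closed_le {α : ℝ} {η : Fin d → ℤ} (hη : ∀ i, |α * η i| < 1)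
    (hμ : ∀ s : Finset (Site d), μ {ω | ∀ x ∈ s, ω x = false} ≤ q ^ s.card)
    (hq : q * ENNReal.ofReal (6 * ∏ i, 4 / (1 - |α * η i|)) ≤ 1) : ∀ᵐ ω ∂μ, ω ∈ LIP α η := by
  have hsum : q * ∑' k : backwardStep d,
      ENNReal.ofReal (Real.exp (-excess (fun i => α * η i) k)) ≤ 1 :=
    (mul_le_mul_right (tsum_backwardStep_exp_neg_excess_le hη) q).trans hq
  filter_upwards [ae_exists_notMem_reachableSet hμ hsum] with ω hω
  exact mem_LIP_of_forall_exists_notMem_reachableSet (fun i => (hη i).le) hω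

theorem IsBernoulli.measure_forall_eq_false {ι : Type*} {p : ℝ} {P : Measure (ι → Bool)}
    (hP : IsBernoulli p P) (s : Finset ι) :
    P {ω | ∀ x ∈ s, ω x = false} = ENNReal.ofReal (1 - p) ^ s.card := by
  simpa using hP.2 s fun _ => false

theorem IsBernoulli.ae_mem_LIP {p : ℝ} {P : Measure (Config d)} (hP : IsBernoulli p P)
    (hp : p ≤ 1) {α : ℝ} {η : Fin d → ℤ} (hη : ∀ i, |α * η i| < 1)
    (hprod : (1 - p) * (6 * ∏ i, 4 / (1 - |α * η i|)) ≤ 1) : ∀ᵐ ω ∂P, ω ∈ LIP α η := by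
  refine ae_mem_LIP_of_measure_closed_le hη (fun s => (hP.measure_forall_eq_false s).le) ?_
  rw [← ENNReal.ofReal_mul (sub_nonneg.2 hp)]
  exact ENNReal.ofReal_le_one.2 hprod

theorem IsSign.one_sub_abs_mul {η : Fin d → ℤ} (hη : IsSign η) {α : ℝ} (hα : 0 ≤ α)
    (i : Fin d) : 1 - |α * η i| = (1 - α) ^ (η i).natAbs := by
  rcases hη i with h | h | h <;> simp [h, abs_of_nonneg hα]

theorem isSign_etaK (d k : ℕ) : IsSign (etaK d k) := fun i => by
  unfold etaK
  split_ifs <;> simp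

theorem sum_natAbs_etaK {k : ℕ} (hk : k ≤ d) : ∑ i, (etaK d k i).natAbs = k := by
  simp [etaK, apply_ite Int.natAbs, Fin.card_filter_val_lt, hk]

theorem qL_lower_bound_in_alpha_general {α : ℝ} (hα : α ∈ Set.Ico (0 : ℝ) 1)
    {η : Fin d → ℤ} (hη : IsSign η) {P : ℝ → Measure (Config d)}
    (hP : ∀ p ∈ Set.Icc (0 : ℝ) 1, IsBernoulli p (P p)) {pc : ℝ}
    (hpc : IsCriticalProb P α η pc) :
    1 / (6 * 4 ^ d) * (1 - α) ^ (∑ i, (η i).natAbs) ≤ 1 - pc := by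
  obtain ⟨hα0, hα1⟩ := hα
  have hpos : 0 < 1 - α := sub_pos.2 hα1
  have hη1 (i : Fin d) : |α * η i| < 1 := by
    rw [← sub_pos, hη.one_sub_abs_mul hα0]
    positivity
  set q : ℝ := 1 / (6 * 4 ^ d) * (1 - α) ^ (∑ i, (η i).natAbs) with hq
  have hq0 : 0 ≤ q := by positivity
  have hq1 : q ≤ 1 := by
    have h4 : (1 : ℝ) ≤ 4 ^ d := one_le_pow₀ (by norm_num)
    exact mul_le_one₀ ((div_le_one (by positivity)).2 (by linarith)) (by positivity)
      (pow_le_one₀ hpos.le (sub_le_self 1 hα0))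
  have hprod : q * (6 * ∏ i, 4 / (1 - |α * η i|)) = 1 := by
    simp only [hη.one_sub_abs_mul hα0, Finset.prod_div_distrib, Finset.prod_const,
      Finset.card_univ, Fintype.card_fin, Finset.prod_pow_eq_pow_sum, hq]
    field_simp
  by_contra! hlt
  have hBer : IsBernoulli (1 - q) (P (1 - q)) := hP _ ⟨sub_nonneg.2 hq1, sub_le_self 1 hq0⟩
  have : IsProbabilityMeasure (P (1 - q)) := hBer.1
  have hLIP : ∀ᵐ ω ∂P (1 - q), ω ∈ LIP α η :=
    hBer.ae_mem_LIP (sub_le_self 1 hq0) hη1 (by rw [sub_sub_self, hprod])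
  have hnull : P (1 - q) (LIP α η) = 0 := hpc.2.1 _ (sub_nonneg.2 hq1) (sub_lt_comm.1 hlt)
  obtain ⟨ω, hω, hω'⟩ := (hLIP.and (measure_eq_zero_iff_ae_notMem.1 hnull)).exists
  exact hω' hω

end Percolation

/-- For each `d ≥ 1` and each `k = 1,…,d` there is a constant
`C(k,d) > 0` such that `q_L(α,d,k) ≥ C(k,d)·(1−α)^k` for all `α ∈ [0,1)`. -/
theorem qL_lower_bound_in_alpha
    {d : ℕ} (hd : 1 ≤ d) (k : ℕ) (hk1 : 1 ≤ k) (hkd : k ≤ d)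
    (P : ℝ → Measure (Config d)) (hP : ∀ p ∈ Set.Icc (0 : ℝ) 1, IsBernoulli p (P p))
    (pc : ℝ → ℝ) (hpc : ∀ α ∈ Set.Ico (0 : ℝ) 1, IsCriticalProb P α (etaK d k) (pc α)) :
    ∃ C : ℝ, 0 < C ∧ ∀ α ∈ Set.Ico (0 : ℝ) 1, C * (1 - α) ^ k ≤ 1 - pc α := by
  refine ⟨1 / (6 * 4 ^ d), by positivity, fun α hα => ?_⟩
  simpa only [sum_natAbs_etaK hkd] using
    qL_lower_bound_in_alpha_general hα (isSign_etaK d k) hP (hpc α hα)
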